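/- Let k_1, ..., k_t be positive integers with Σ_{i=1}^t k_i = 2K, K ≥ 1. Consider candidates C = {a_1, p, b_1, b_2, b_3}, the axis a_1 L p L b_1 L b_2 L b_3, and the scoring vector ⟨4,3,2,0,0⟩ with the min scoring-rule extension. The nonmanipulators are one voter of weight 24K voting a_1 > p > b_1 > b_2 > b_3 and one voter of weight 9K voting b_1 > b_2 > b_3 > p > a_1. The manipulators have weights 4k_1, ..., 4k_t. Then there exist weak-order votes for the manipulators, each single-peaked with respect to the axis, such that p is a winner (no candidate has strictly greater total weighted score under ⟨4,3,2,0,0⟩ with the min extension) if and only if there exists a subset I ⊆ {1,...,t} with Σ_{i∈I} k_i = K. -/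

import Mathlib

open scoped Classical

section Defs

variable {C : Type*}

/-- Strict preference: `a` is strictly preferred to `b` in the vote `v`. -/
def SPref (v : C → C → Prop) (a b : C) : Prop := v a b ∧ ¬ v b a

/-- Indifference (a tie) between `a` and `b` in the vote `v`. -/
def Indiff (v : C → C → Prop) (a b : C) : Prop := v a b ∧ v b a

/-- A weak order: a complete (hence reflexive) and transitive binary relation. -/
def IsWeakOrder (v : C → C → Prop) : Prop := (∀ a b, v a b ∨ v b a) ∧ Transitive v

/-- A total (linear) order: an antisymmetric weak order. -/
def IsTotalOrderRel (v : C → C → Prop) : Prop :=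
  IsWeakOrder v ∧ ∀ a b, v a b → v b a → a = b

/-- A top order: a weak order all of whose ties are within the least-preferred
indifference class. -/
def IsTopOrder (v : C → C → Prop) : Prop :=
  IsWeakOrder v ∧ ∀ a b, a ≠ b → Indiff v a b → ∀ c, v c a

/-- `c` is among the most preferred candidates of `v`. -/
def TopCand (v : C → C → Prop) (c : C) : Prop := ∀ d, v c d

/-- `v` is single-peaked w.r.t. the axis `A`: there is a peak `p` (which is then the
unique most preferred candidate) such that `v` is strictly increasing along the part of
the axis up to `p` and strictly decreasing along the part of the axis after `p`. -/
def IsSinglePeaked (A : LinearOrder C) (v : C → C → Prop) : Prop :=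
  ∃ p : C, (∀ a b, A.lt a b → A.le b p → SPref v b a) ∧
           (∀ a b, A.le p a → A.lt a b → SPref v a b)

/-- `v` is single-plateaued w.r.t. the axis `A`: the axis splits into segments `X,Y,Z`
where the interval `Y = [y₁, y₂]` consists exactly of the most preferred candidates,
`v` is strictly increasing along `X` and strictly decreasing along `Z`. -/
def IsSinglePlateaued (A : LinearOrder C) (v : C → C → Prop) : Prop :=
  ∃ y₁ y₂ : C, A.le y₁ y₂ ∧ (∀ c, (A.le y₁ c ∧ A.le c y₂) ↔ TopCand v c) ∧
    (∀ a b, A.lt a b → A.le b y₁ → SPref v b a) ∧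
    (∀ a b, A.le y₂ a → A.lt a b → SPref v a b)

/-- `v` is possibly single-peaked w.r.t. the axis `A`: `v` is weakly increasing along
the axis up to some point `p` and weakly decreasing afterwards (so the most preferred
candidates form an interval `Y` around `p`). -/
def IsPossiblySinglePeaked (A : LinearOrder C) (v : C → C → Prop) : Prop :=
  ∃ p : C, (∀ a b, A.lt a b → A.le b p → v b a) ∧
           (∀ a b, A.le p a → A.lt a b → v a b)

/-- `v` is single-peaked with outside options w.r.t. the axis `A`: the axis splits into
segments `O₁,X,Y,Z,O₂` where the inner interval `[l,r]` (split into `X`, the peak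
`Y = {p}`, and `Z`) is single-peaked, every inner candidate is strictly preferred to
every outside candidate, and all outside candidates are mutually indifferent. -/
def IsSPOutsideOptions (A : LinearOrder C) (v : C → C → Prop) : Prop :=
  ∃ l p r : C, A.le l p ∧ A.le p r ∧
    (∀ a b, A.le l a → A.lt a b → A.le b p → SPref v b a) ∧
    (∀ a b, A.le p a → A.lt a b → A.le b r → SPref v a b) ∧
    (∀ a b, A.le l a → A.le a r → ¬ (A.le l b ∧ A.le b r) → SPref v a b) ∧
    (∀ a b, ¬ (A.le l a ∧ A.le a r) → ¬ (A.le l b ∧ A.le b r) → Indiff v a b)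

/-- The number of candidates strictly preferred to `c` (the `k_i` of `c`'s class). -/
noncomputable def aboveCount [Fintype C] (v : C → C → Prop) (c : C) : ℕ :=
  Nat.card {d : C // SPref v d c}

/-- The size of `c`'s indifference class (including `c` itself). -/
noncomputable def tiedCount [Fintype C] (v : C → C → Prop) (c : C) : ℕ :=
  Nat.card {d : C // Indiff v d c}

/-- The number of indifference classes strictly below `c`'s class. -/
noncomputable def classesBelow [Fintype C] (v : C → C → Prop) (c : C) : ℕ :=
  Set.ncard ((fun d => aboveCount v d) '' {d : C | SPref v c d})

/-- An `m`-candidate scoring vector, indexed by positions `1..m`: `α 1 ≥ α 2 ≥ ... ≥ α m`. -/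
def IsScoringVec (m : ℕ) (α : ℕ → ℕ) : Prop :=
  ∀ i j, 1 ≤ i → i ≤ j → j ≤ m → α j ≤ α i

/-- The four scoring-rule extensions: min, max, round down, and average. -/
inductive ScoreExt : Type
  | emin | emax | eroundDown | eaverage

/-- The score of candidate `c` in a weak-order vote `v` under the scoring vector `α`
(for `m` candidates) with scoring-rule extension `E`: writing the vote as indifference
classes `G₁ > ... > G_r` and `k_i = |G₁| + ... + |G_{i-1}|`, a candidate in `G_i` scores
`α (k_i + |G_i|)` under min, `α (k_i + 1)` under max, `α (m - r + i)` under round down,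
and `(α (k_i + 1) + ... + α (k_i + |G_i|)) / |G_i|` under average. -/
noncomputable def extScore [Fintype C] (m : ℕ) (α : ℕ → ℕ) (E : ScoreExt)
    (v : C → C → Prop) (c : C) : ℚ :=
  match E with
  | .emin => α (aboveCount v c + tiedCount v c)
  | .emax => α (aboveCount v c + 1)
  | .eroundDown => α (m - classesBelow v c)
  | .eaverage =>
      (∑ j ∈ Finset.Icc (aboveCount v c + 1) (aboveCount v c + tiedCount v c), (α j : ℚ))
        / (tiedCount v c : ℚ)

/-- The total weighted score of candidate `c` for a weighted profile `S`
(a list of weight/vote pairs). -/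
noncomputable def profScore [Fintype C] (m : ℕ) (α : ℕ → ℕ) (E : ScoreExt)
    (S : List (ℕ × (C → C → Prop))) (c : C) : ℚ :=
  (S.map (fun wv => (wv.1 : ℚ) * extScore m α E wv.2 c)).sum

/-- The total weight of the voters in `S` strictly preferring `a` to `b`. -/
noncomputable def prefWeight (S : List (ℕ × (C → C → Prop))) (a b : C) : ℕ :=
  (S.map (fun wv => if SPref wv.2 a b then wv.1 else 0)).sum

end Defs

/-- The scoring vector `⟨4,3,2,0,0⟩`, indexed by positions `1,...,5`. -/
def scvec : ℕ → ℕ := fun i => [0, 4, 3, 2, 0, 0].getD i 0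

/-- The candidates: `a₁` is `0`, `p` is `1`, `b₁` is `2`, `b₂` is `3`, `b₃` is `4`;
the axis is the natural order `a₁ L p L b₁ L b₂ L b₃` on `Fin 5`.
The vote `a₁ > p > b₁ > b₂ > b₃`. -/
def voteA : Fin 5 → Fin 5 → Prop := fun x y => x ≤ y

/-- The vote `b₁ > b₂ > b₃ > p > a₁` (given via its rank function). -/
def voteB : Fin 5 → Fin 5 → Prop := fun x y => (![4, 3, 0, 1, 2] x : ℕ) ≤ ![4, 3, 0, 1, 2] y

/-!
Let `x` and `y` be the leads a manipulator gives `p` over `a₁` and over `b₁`. A single-peaked vote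
has `x + 2y ≤ 6`, and equality forces `y ∈ {1, 2}`. To make up for the nonmanipulators, the leads
weighted by the `kᵢ` have to sum to at least `6K` over `a₁` and at least `3K` over `b₁`. As the
`kᵢ` sum to `2K`, every manipulator attains equality and the weighted sum of the `y` is exactly
`3K`, so the `kᵢ` of the manipulators with `y = 2` sum to `K`. Conversely, the votes
`p > a₁ ~ b₁ > b₂ > b₃` and `p > b₁ > b₂ > b₃ > a₁` attain equality with `y = 2` and `y = 1`.
-/

lemma IsWeakOrder.refl {C : Type*} {v : C → C → Prop} (hv : IsWeakOrder v) (a : C) : v a a :=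
  or_self_iff.mp (hv.1 a a)

section MinScore

variable {C : Type*} [Fintype C] {α : ℕ → ℕ} {v : C → C → Prop} {a b c : C}

/-- The score of `c` in the weak order `v` under the min extension of `α`, as a natural number:
`k_i + |G_i|` is the number of candidates weakly preferred to a member of `G_i`. -/
noncomputable def minScore (α : ℕ → ℕ) (v : C → C → Prop) (c : C) : ℕ :=
  α (Finset.card {d | v d c})

lemma aboveCount_add_tiedCount (v : C → C → Prop) (c : C) :
    aboveCount v c + tiedCount v c = Finset.card {d | v d c} := by
  have hsplit : ({d | v d c} : Finset C) =
      ({d | SPref v d c} : Finset C) ∪ ({d | Indiff v d c} : Finset C) := by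
    ext d
    simp only [Finset.mem_union, Finset.mem_filter_univ]
    unfold SPref Indiff
    tauto
  rw [hsplit, Finset.card_union_of_disjoint
    (Finset.disjoint_filter.mpr fun d _ hstrict htie => hstrict.2 htie.2)]
  simp only [aboveCount, tiedCount, Nat.card_eq_fintype_card, Fintype.card_subtype]

lemma extScore_emin (m : ℕ) (α : ℕ → ℕ) (v : C → C → Prop) (c : C) :
    extScore m α .emin v c = minScore α v c := by
  simp only [extScore, minScore, aboveCount_add_tiedCount]

lemma profScore_emin (m : ℕ) (α : ℕ → ℕ) (S : List (ℕ × (C → C → Prop))) (c : C) :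
    profScore m α .emin S c = (S.map fun wv => wv.1 * minScore α wv.2 c).sum := by
  simp only [profScore, extScore_emin, Nat.cast_list_sum, List.map_map, Function.comp_def,
    Nat.cast_mul]

lemma minScore_le (hα : IsScoringVec (Fintype.card C) α) {s : Finset C} (hs : s.Nonempty)
    (h : ∀ d ∈ s, v d c) : minScore α v c ≤ α s.card :=
  hα _ _ hs.card_pos (Finset.card_le_card fun d hd => by simpa using h d hd)
    (Finset.card_le_univ _)

lemma le_minScore (hα : IsScoringVec (Fintype.card C) α) {s : Finset C} (hc : v c c)
    (h : ∀ d, v d c → d ∈ s) : α s.card ≤ minScore α v c :=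
  hα _ _ (Finset.card_pos.mpr ⟨c, by simpa using hc⟩)
    (Finset.card_le_card fun d hd => h d (by simpa using hd)) (Finset.card_le_univ _)

lemma IsWeakOrder.minScore_le_minScore (hv : IsWeakOrder v)
    (hα : IsScoringVec (Fintype.card C) α) (hab : v a b) : minScore α v b ≤ minScore α v a :=
  minScore_le hα ⟨a, by simpa using hv.refl a⟩ fun d hd => hv.2 (by simpa using hd) hab

end MinScore

section Peak

variable {C : Type*} [LinearOrder C] {v : C → C → Prop} {q d : C}

/-- `q` is the peak of the vote `v`, which is single-peaked with respect to the order of `C`. -/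
def HasPeak (v : C → C → Prop) (q : C) : Prop :=
  (∀ a b, a < b → b ≤ q → SPref v b a) ∧ ∀ a b, q ≤ a → a < b → SPref v a b

lemma isSinglePeaked_iff_exists_hasPeak :
    IsSinglePeaked inferInstance v ↔ ∃ q, HasPeak v q := Iff.rfl

lemma HasPeak.eq_of_pref (hq : HasPeak v q) (hd : v d q) : d = q := by
  rcases lt_trichotomy d q with hlt | heq | hgt
  · exact absurd hd (hq.1 d q hlt le_rfl).2
  · exact heq
  · exact absurd hd (hq.2 q d le_rfl hgt).2

lemma HasPeak.score_one_le_minScore [Fintype C] {α : ℕ → ℕ} (hq : HasPeak v q) (hv : IsWeakOrder v)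
    (hα : IsScoringVec (Fintype.card C) α) : α 1 ≤ minScore α v q := by
  simpa using le_minScore hα (s := {q}) (hv.refl q) fun d hd => by
    simpa using hq.eq_of_pref hd

end Peak

section RankVote

variable {C : Type*}

/-- The weak order that prefers candidates of smaller rank `f`. -/
def rankVote (f : C → ℕ) : C → C → Prop := fun x y => f x ≤ f y

lemma isWeakOrder_rankVote (f : C → ℕ) : IsWeakOrder (rankVote f) :=
  ⟨fun a b => le_total (f a) (f b), fun _ _ _ => le_trans⟩

lemma minScore_rankVote [Fintype C] (α : ℕ → ℕ) (f : C → ℕ) (c : C) :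
    minScore α (rankVote f) c = α (Finset.card {d | f d ≤ f c}) := by
  unfold minScore rankVote
  congr

end RankVote

lemma minScore_voteA (c : Fin 5) : minScore scvec voteA c = ![4, 3, 2, 0, 0] c :=
  (minScore_rankVote scvec Fin.val c).trans (by revert c; decide)

lemma minScore_voteB (c : Fin 5) : minScore scvec voteB c = ![0, 0, 4, 3, 2] c :=
  (minScore_rankVote scvec ![4, 3, 0, 1, 2] c).trans (by revert c; decide)

lemma isScoringVec_scvec : IsScoringVec (Fintype.card (Fin 5)) scvec := by
  intro i j hi hij hj
  rw [Fintype.card_fin] at hj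
  interval_cases j <;> interval_cases i <;> decide

/-- The number of points by which the vote `v` puts `p` ahead of the candidate `d`, under
`⟨4,3,2,0,0⟩` with the min extension. -/
noncomputable def lead (v : Fin 5 → Fin 5 → Prop) (d : Fin 5) : ℤ :=
  minScore scvec v 1 - minScore scvec v d

-- The vector is `24⟨4,3,2,0,0⟩ + 9⟨0,0,4,3,2⟩` minus its value `72` at `p`.
lemma profScore_le_profScore_p_iff {t : ℕ} (ks : Fin t → ℕ) (K : ℕ)
    (tv : Fin t → Fin 5 → Fin 5 → Prop) (d : Fin 5) :
    profScore 5 scvec .emin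
        ([(24 * K, voteA), (9 * K, voteB)] ++ List.ofFn fun i => (4 * ks i, tv i)) d ≤
      profScore 5 scvec .emin
        ([(24 * K, voteA), (9 * K, voteB)] ++ List.ofFn fun i => (4 * ks i, tv i)) 1 ↔
    K * ![24, 0, 12, -45, -54] d ≤ 4 * ∑ i, ks i * lead (tv i) d := by
  have hmanip : 4 * ∑ i, ks i * lead (tv i) d =
      ((∑ i, 4 * ks i * minScore scvec (tv i) 1 : ℕ) : ℤ) -
        (∑ i, 4 * ks i * minScore scvec (tv i) d : ℕ) := by
    push_cast
    rw [← Finset.sum_sub_distrib, Finset.mul_sum]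
    exact Finset.sum_congr rfl fun i _ => by rw [lead]; ring
  rw [hmanip]
  simp only [profScore_emin, Nat.cast_le, List.map_append, List.sum_append, List.map_cons,
    List.map_nil, List.sum_cons, List.sum_nil, List.map_ofFn, List.sum_ofFn, Function.comp_def,
    minScore_voteA, minScore_voteB]
  fin_cases d <;> simp only [Fin.isValue, Fin.zero_eta, Fin.mk_one, Fin.reduceFinMk,
    Matrix.cons_val] <;> omega

section SinglePeakedLeads

variable {v : Fin 5 → Fin 5 → Prop}

lemma minScore_scvec_le_four (hv : IsWeakOrder v) (c : Fin 5) : minScore scvec v c ≤ 4 :=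
  minScore_le isScoringVec_scvec (s := {c}) (Finset.singleton_nonempty c) fun d hd => by
    rw [Finset.mem_singleton.mp hd]; exact hv.refl c

lemma lead_add_two_mul_lead_lt_of_peak_a₁ (hv : IsWeakOrder v) (hq : HasPeak v 0) :
    lead v 0 + 2 * lead v 2 < 6 := by
  have ha₁ : 4 ≤ minScore scvec v 0 := hq.score_one_le_minScore hv isScoringVec_scvec
  have hp : minScore scvec v 1 ≤ 3 :=
    minScore_le isScoringVec_scvec (s := {0, 1}) (Finset.insert_nonempty _ _) <| by
      simpa using And.intro (hq.2 0 1 le_rfl (by decide)).1 (hv.refl 1)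
  simp only [lead]
  omega

lemma lead_add_two_mul_lead_lt_of_pref_b₁_p (hv : IsWeakOrder v) (h : v 2 1) :
    lead v 0 + 2 * lead v 2 < 6 := by
  have hb₁ := hv.minScore_le_minScore isScoringVec_scvec h
  have hp := minScore_scvec_le_four hv 1
  simp only [lead]
  omega

lemma minScore_b₁_of_peak_p (hv : IsWeakOrder v) (hq : HasPeak v 1) :
    minScore scvec v 2 = if v 0 2 then 2 else 3 := by
  have hp : v 1 2 := (hq.2 1 2 le_rfl (by decide)).1
  have hb₂ : ¬ v 3 2 := (hq.2 2 3 (by decide) (by decide)).2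
  have hb₃ : ¬ v 4 2 := (hq.2 2 4 (by decide) (by decide)).2
  have hweak : ({d | v d 2} : Finset (Fin 5)) = if v 0 2 then {0, 1, 2} else {1, 2} := by
    ext d
    split_ifs with ha₁ <;> fin_cases d <;> simp [ha₁, hp, hb₂, hb₃, hv.refl 2]
  rw [minScore, hweak]
  split_ifs <;> rfl

lemma lead_of_peak_p (hv : IsWeakOrder v) (hq : HasPeak v 1) :
    lead v 0 + 2 * lead v 2 ≤ 6 ∧ (lead v 2 = 1 ∨ lead v 2 = 2) := by
  have hp : minScore scvec v 1 = 4 :=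
    (minScore_scvec_le_four hv 1).antisymm (hq.score_one_le_minScore hv isScoringVec_scvec)
  have hb₁ := minScore_b₁_of_peak_p hv hq
  simp only [lead]
  split_ifs at hb₁ with h
  · have ha₁ := hv.minScore_le_minScore isScoringVec_scvec h
    omega
  · omega

lemma lead_add_two_mul_lead_of_isSinglePeaked (hv : IsWeakOrder v)
    (hsp : IsSinglePeaked (inferInstance : LinearOrder (Fin 5)) v) :
    lead v 0 + 2 * lead v 2 ≤ 6 ∧
      (lead v 0 + 2 * lead v 2 = 6 → lead v 2 = 1 ∨ lead v 2 = 2) := by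
  obtain ⟨q, hq⟩ := isSinglePeaked_iff_exists_hasPeak.mp hsp
  obtain rfl | rfl | hb : q = 0 ∨ q = 1 ∨ 2 ≤ q := by omega
  · have hlt := lead_add_two_mul_lead_lt_of_peak_a₁ hv hq
    exact ⟨hlt.le, fun heq => absurd heq hlt.ne⟩
  · exact (lead_of_peak_p hv hq).imp_right fun h _ => h
  · have hlt := lead_add_two_mul_lead_lt_of_pref_b₁_p hv (hq.1 1 2 (by decide) hb).1
    exact ⟨hlt.le, fun heq => absurd heq hlt.ne⟩

end SinglePeakedLeads

section WeightedSums

variable {ι : Type*} [Fintype ι] {k : ι → ℕ}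

lemma eq_of_mul_sum_le_weighted_sum {f : ι → ℤ} {c : ℤ} (hle : ∀ i, f i ≤ c)
    (hsum : c * ∑ i, (k i : ℤ) ≤ ∑ i, k i * f i) {i : ι} (hi : k i ≠ 0) : f i = c := by
  have hterm : ∀ j ∈ Finset.univ, k j * f j ≤ k j * c := fun j _ =>
    mul_le_mul_of_nonneg_left (hle j) (Nat.cast_nonneg _)
  have htotal : ∑ j, k j * f j = ∑ j, k j * c :=
    (Finset.sum_le_sum hterm).antisymm (by rwa [← Finset.sum_mul, mul_comm])
  exact mul_left_cancel₀ (Nat.cast_ne_zero.mpr hi)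
    ((Finset.sum_eq_sum_iff_of_le hterm).mp htotal i (Finset.mem_univ i))

lemma weighted_sum_eq_sum_add_sum_filter_eq_two {y : ι → ℤ}
    (hy : ∀ i, k i ≠ 0 → y i = 1 ∨ y i = 2) :
    ∑ i, k i * y i = ∑ i, (k i : ℤ) + ∑ i with y i = 2, (k i : ℤ) := by
  rw [Finset.sum_filter, ← Finset.sum_add_distrib]
  refine Finset.sum_congr rfl fun i _ => ?_
  obtain hi | hi := eq_or_ne (k i) 0
  · simp [hi]
  · rcases hy i hi with h | h <;> simp [h, mul_two]

lemma exists_sum_eq_of_weighted_leads {K : ℕ} {x y : ι → ℤ} (hk : ∑ i, k i = 2 * K)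
    (hle : ∀ i, x i + 2 * y i ≤ 6) (htight : ∀ i, x i + 2 * y i = 6 → y i = 1 ∨ y i = 2)
    (hx : 6 * (K : ℤ) ≤ ∑ i, k i * x i) (hy : 3 * (K : ℤ) ≤ ∑ i, k i * y i) :
    ∃ I : Finset ι, ∑ i ∈ I, k i = K := by
  have hkℤ : ∑ i, (k i : ℤ) = 2 * K := mod_cast hk
  have hlinear : ∑ i, k i * (x i + 2 * y i) = ∑ i, k i * x i + 2 * ∑ i, k i * y i := by
    rw [Finset.mul_sum, ← Finset.sum_add_distrib]
    exact Finset.sum_congr rfl fun i _ => by ring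
  have hupper : ∑ i, k i * (x i + 2 * y i) ≤ (2 * K : ℤ) * 6 := by
    rw [← hkℤ, Finset.sum_mul]
    exact Finset.sum_le_sum fun i _ => mul_le_mul_of_nonneg_left (hle i) (Nat.cast_nonneg _)
  have hvalues : ∀ i, k i ≠ 0 → y i = 1 ∨ y i = 2 := fun i hi =>
    htight i (eq_of_mul_sum_le_weighted_sum hle (by linarith) hi)
  have hcount := weighted_sum_eq_sum_add_sum_filter_eq_two hvalues
  exact ⟨({i | y i = 2} : Finset ι), by zify; linarith⟩

end WeightedSums

/-- The vote `p > b₁ > b₂ > b₃ > a₁`. -/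
def voteStrict : Fin 5 → Fin 5 → Prop := rankVote ![4, 0, 1, 2, 3]

/-- The vote `p > a₁ ~ b₁ > b₂ > b₃`. -/
def voteTied : Fin 5 → Fin 5 → Prop := rankVote ![1, 0, 1, 2, 3]

lemma lead_voteStrict (d : Fin 5) : lead voteStrict d = ![4, 0, 1, 2, 4] d := by
  simp only [lead, voteStrict, minScore_rankVote]
  revert d
  decide

lemma lead_voteTied (d : Fin 5) : lead voteTied d = ![2, 0, 2, 4, 4] d := by
  simp only [lead, voteTied, minScore_rankVote]
  revert d
  decide

lemma hasPeak_voteStrict : HasPeak voteStrict 1 := by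
  simp only [HasPeak, SPref, voteStrict, rankVote]
  decide

lemma hasPeak_voteTied : HasPeak voteTied 1 := by
  simp only [HasPeak, SPref, voteTied, rankVote]
  decide

lemma sum_mul_lead_ite {ι : Type*} [Fintype ι] [DecidableEq ι] {k : ι → ℕ} {K : ℕ}
    {I : Finset ι} (hk : ∑ i, k i = 2 * K) (hI : ∑ i ∈ I, k i = K) (d : Fin 5) :
    ∑ i, k i * lead (if i ∈ I then voteTied else voteStrict) d =
      K * ![6, 0, 3, 6, 8] d := by
  have hcompl : ∑ i ∈ Iᶜ, k i = K := by
    have := Finset.sum_add_sum_compl I k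
    omega
  calc ∑ i, k i * lead (if i ∈ I then voteTied else voteStrict) d
      = ∑ i ∈ I, k i * lead voteTied d + ∑ i ∈ Iᶜ, k i * lead voteStrict d := by
        rw [← Finset.sum_add_sum_compl I]
        congr 1 <;> refine Finset.sum_congr rfl fun i hi => ?_
        · rw [if_pos hi]
        · rw [if_neg (Finset.mem_compl.mp hi)]
    _ = K * (![2, 0, 2, 4, 4] d + ![4, 0, 1, 2, 4] d) := by
        rw [← Finset.sum_mul, ← Finset.sum_mul, ← Nat.cast_sum, ← Nat.cast_sum, hI, hcompl,
          lead_voteTied, lead_voteStrict, mul_add]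
    _ = K * ![6, 0, 3, 6, 8] d := by fin_cases d <;> rfl

/-- With the min scoring-rule extension, nonmanipulators of weight `24K`
voting `a₁ > p > b₁ > b₂ > b₃` and of weight `9K` voting `b₁ > b₂ > b₃ > p > a₁`, and
manipulators of weights `4k₁, ..., 4kₜ` (where `k₁ + ... + kₜ = 2K`, `K ≥ 1`, each
`kᵢ > 0`), the manipulators can cast weak-order votes, single-peaked w.r.t. the axis
`a₁ L p L b₁ L b₂ L b₃`, that make `p` a winner under `⟨4,3,2,0,0⟩` with the min
extension iff some subcollection of the `kᵢ` sums to `K`. -/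
theorem manipulation_43200_min_extension_iff_partition
    (t : ℕ) (ks : Fin t → ℕ) (hks : ∀ i, 0 < ks i) (K : ℕ) (hK : 1 ≤ K)
    (hsum : ∑ i, ks i = 2 * K) :
    (∃ tv : Fin t → (Fin 5 → Fin 5 → Prop),
      (∀ i, IsWeakOrder (tv i) ∧
        IsSinglePeaked (inferInstance : LinearOrder (Fin 5)) (tv i)) ∧
      (∀ d : Fin 5,
        profScore 5 scvec ScoreExt.emin
            ([(24 * K, voteA), (9 * K, voteB)] ++ List.ofFn (fun i => (4 * ks i, tv i))) d ≤
          profScore 5 scvec ScoreExt.emin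
            ([(24 * K, voteA), (9 * K, voteB)] ++ List.ofFn (fun i => (4 * ks i, tv i)))
            (1 : Fin 5))) ↔
    (∃ I : Finset (Fin t), ∑ i ∈ I, ks i = K) := by
  simp only [profScore_le_profScore_p_iff]
  constructor
  · rintro ⟨tv, htv, hwin⟩
    have hlead i := lead_add_two_mul_lead_of_isSinglePeaked (htv i).1 (htv i).2
    have ha₁ : (K : ℤ) * 24 ≤ 4 * ∑ i, ks i * lead (tv i) 0 := hwin 0
    have hb₁ : (K : ℤ) * 12 ≤ 4 * ∑ i, ks i * lead (tv i) 2 := hwin 2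
    exact exists_sum_eq_of_weighted_leads hsum (fun i => (hlead i).1) (fun i => (hlead i).2)
      (by linarith) (by linarith)
  · rintro ⟨I, hI⟩
    refine ⟨fun i => if i ∈ I then voteTied else voteStrict, fun i => ?_, fun d => ?_⟩
    · dsimp only
      split_ifs
      · exact ⟨isWeakOrder_rankVote _, 1, hasPeak_voteTied⟩
      · exact ⟨isWeakOrder_rankVote _, 1, hasPeak_voteStrict⟩
    · dsimp only
      rw [sum_mul_lead_ite hsum hI]
      fin_cases d <;> simp only [Fin.isValue, Fin.zero_eta, Fin.mk_one, Fin.reduceFinMk,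
        Matrix.cons_val] <;> omega
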